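/- Let a, b ∈ F_p be nonzero floating-point numbers and let s ∈ {RD(a + b), RU(a + b)}. If the exponents of a and b satisfy |e_a − e_b| ≤ p − 1, then s − (a + b) ∈ F_p, i.e. the rounding error of the directed-rounded sum is itself exactly representable. -/

import Mathlib

/-!
If, say, `e_b ≤ e_a`, then `a + b = N * 2 ^ e_b` for an integer `N`, and the bound on the
exponent gap gives `|N| < 2 ^ (2 * p)`. If `|N| ≤ 2 ^ p` the sum is representable and the error is
zero. Otherwise let `E` be the exponent `fpExp p (a + b)`, so that `e_b < E ≤ e_b + p`. Rounding
down gives the multiple of `2 ^ E` just below the sum (`RD_eq`), which is also a multiple of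
`2 ^ e_b`. The error is hence an integer multiple of `2 ^ e_b` smaller than
`2 ^ E ≤ 2 ^ p * 2 ^ e_b` in absolute value, so it is representable (`RD_error`).
Rounding up reduces to rounding down by the symmetry `x ↦ -x`.
-/

/-- The radix-2, precision-`p` floating-point numbers with unlimited exponent range. -/
def Fp (p : ℕ) : Set ℝ := {x : ℝ | ∃ M e : ℤ, |M| ≤ 2 ^ p - 1 ∧ x = (M : ℝ) * (2 : ℝ) ^ e}

/-- Round toward `-∞`: the largest floating-point number `≤ x`. -/
noncomputable def RD (p : ℕ) (x : ℝ) : ℝ := sSup {f : ℝ | f ∈ Fp p ∧ f ≤ x}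

/-- Round toward `+∞`: the smallest floating-point number `≥ x`. -/
noncomputable def RU (p : ℕ) (x : ℝ) : ℝ := sInf {f : ℝ | f ∈ Fp p ∧ x ≤ f}

/-- `y` is a faithful rounding of `x`. -/
def Faithful (p : ℕ) (x y : ℝ) : Prop := y = RD p x ∨ y = RU p x

/-- The exponent of a nonzero `a ∈ F_p`: `e_a = ⌊log₂ |a|⌋ - p + 1`. -/
noncomputable def fpExp (p : ℕ) (a : ℝ) : ℤ := Int.log 2 |a| - (p : ℤ) + 1

lemma neg_mem_Fp {p : ℕ} {x : ℝ} (h : x ∈ Fp p) : -x ∈ Fp p := by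
  obtain ⟨M, e, hM, rfl⟩ := h
  exact ⟨-M, e, by rwa [abs_neg], by push_cast; ring⟩

lemma RU_eq_neg_RD (p : ℕ) (x : ℝ) : RU p x = -RD p (-x) := by
  unfold RU RD
  rw [Real.sInf_def]
  congr 2
  ext f
  simp only [Set.mem_neg, Set.mem_ofPred_eq]
  constructor
  · rintro ⟨h1, h2⟩
    exact ⟨by simpa using neg_mem_Fp h1, by linarith⟩
  · rintro ⟨h1, h2⟩
    exact ⟨neg_mem_Fp h1, by linarith⟩

/-- The mantissa `2 ^ p` is also allowed, since `2 ^ p * 2 ^ E = 1 * 2 ^ (p + E)`. -/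
lemma mem_Fp_of_le {p : ℕ} (hp : 2 ≤ p) (M E : ℤ) (hM : |M| ≤ 2 ^ p) :
    (M : ℝ) * (2 : ℝ) ^ E ∈ Fp p := by
  have h4 : (2 : ℤ) ^ 2 ≤ 2 ^ p := pow_le_pow_right₀ (by norm_num) hp
  have hone : (1 : ℝ) * (2 : ℝ) ^ ((p : ℤ) + E) = 2 ^ p * 2 ^ E := by
    rw [zpow_add₀ (by norm_num), zpow_natCast, one_mul]
  rcases lt_or_eq_of_le hM with h | h
  · exact ⟨M, E, by omega, rfl⟩
  · have hpow : (2 : ℝ) ^ p * 2 ^ E ∈ Fp p :=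
      ⟨1, (p : ℤ) + E, by rw [abs_one]; omega, by rw [← hone]; norm_num⟩
    rcases abs_eq (by positivity) |>.1 h with h | h
    · rw [h]; push_cast; exact hpow
    · rw [h]; push_cast; rw [neg_mul]; exact neg_mem_Fp hpow

/-- A floating-point number of absolute value at least `2 ^ (p - 1) * 2 ^ E` is an integer
multiple of `2 ^ E`. -/
lemma exists_eq_mul_of_le {p : ℕ} {f : ℝ} (hf : f ∈ Fp p) (E : ℤ)
    (h : (2 : ℝ) ^ ((p : ℤ) - 1 + E) ≤ |f|) : ∃ n : ℤ, f = n * (2 : ℝ) ^ E := by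
  obtain ⟨M, e, hM, rfl⟩ := hf
  have hMr : |(M : ℝ)| < 2 ^ (p : ℤ) := by
    rw [zpow_natCast]; exact_mod_cast (by omega : |M| < 2 ^ p)
  have hpos : (0 : ℝ) < 2 ^ e := by positivity
  rw [abs_mul, abs_of_pos hpos] at h
  have h2 : (2 : ℝ) ^ ((p : ℤ) - 1 + E) < 2 ^ ((p : ℤ) + e) := by
    rw [zpow_add₀ (by norm_num) (p : ℤ) e]
    exact h.trans_lt (mul_lt_mul_of_pos_right hMr hpos)
  have h3 := (zpow_lt_zpow_iff_right₀ (by norm_num : (1 : ℝ) < 2)).1 h2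
  refine ⟨M * 2 ^ (e - E).toNat, ?_⟩
  push_cast
  rw [← zpow_natCast, mul_assoc, ← zpow_add₀ (by norm_num)]
  congr 2
  omega

lemma zpow_fpExp_le (p : ℕ) {x : ℝ} (hx : x ≠ 0) :
    (2 : ℝ) ^ ((p : ℤ) - 1 + fpExp p x) ≤ |x| := by
  have := Int.zpow_log_le_self (b := 2) (by norm_num) (abs_pos.2 hx)
  rwa [show (p : ℤ) - 1 + fpExp p x = Int.log 2 |x| by unfold fpExp; ring]

lemma lt_zpow_fpExp (p : ℕ) (x : ℝ) :
    |x| < (2 : ℝ) ^ ((p : ℤ) + fpExp p x) := by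
  have := Int.lt_zpow_succ_log_self (b := 2) (by norm_num) |x|
  rwa [show (p : ℤ) + fpExp p x = Int.log 2 |x| + 1 by unfold fpExp; ring]

lemma exists_mantissa {p : ℕ} {a : ℝ} (ha : a ∈ Fp p) (ha0 : a ≠ 0) :
    ∃ A : ℤ, |A| ≤ 2 ^ p - 1 ∧ a = A * (2 : ℝ) ^ fpExp p a := by
  obtain ⟨A, hA⟩ := exists_eq_mul_of_le ha _ (zpow_fpExp_le p ha0)
  refine ⟨A, ?_, hA⟩
  have h := lt_zpow_fpExp p a
  have hpos : (0 : ℝ) < 2 ^ fpExp p a := by positivity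
  rw [zpow_add₀ (by norm_num), zpow_natCast] at h
  have h2 : |(A : ℝ)| * 2 ^ fpExp p a < 2 ^ p * 2 ^ fpExp p a := by
    rwa [← abs_of_pos hpos, ← abs_mul, abs_of_pos hpos, ← hA]
  have h3 := lt_of_mul_lt_mul_right h2 hpos.le
  have h4 : |A| < 2 ^ p := by exact_mod_cast h3
  omega

lemma RD_eq_self {p : ℕ} {x : ℝ} (hx : x ∈ Fp p) : RD p x = x :=
  IsGreatest.csSup_eq ⟨⟨hx, le_rfl⟩, fun _ h => h.2⟩

/-- In the binade of `x` the floating-point numbers are exactly the multiples of `2 ^ fpExp p x`,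
so rounding down is a floor on that grid. -/
lemma RD_eq {p : ℕ} (hp : 2 ≤ p) {x : ℝ} (hx : x ≠ 0) :
    RD p x = ⌊x / (2 : ℝ) ^ fpExp p x⌋ * (2 : ℝ) ^ fpExp p x := by
  have hlo := zpow_fpExp_le p hx
  have hhi := lt_zpow_fpExp p x
  generalize fpExp p x = E at *
  have hpos : (0 : ℝ) < 2 ^ E := by positivity
  have hfl : (⌊x / (2 : ℝ) ^ E⌋ : ℝ) * 2 ^ E ≤ x := by
    rw [← le_div_iff₀ hpos]; exact Int.floor_le _
  apply IsGreatest.csSup_eq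
  refine ⟨⟨mem_Fp_of_le hp _ _ ?_, hfl⟩, ?_⟩
  · rw [zpow_add₀ (by norm_num), zpow_natCast, abs_lt, ← neg_mul] at hhi
    have h1 := (lt_div_iff₀ hpos).2 hhi.1
    have h2 := (div_lt_iff₀ hpos).2 hhi.2
    rw [abs_le]
    constructor
    · apply Int.le_floor.2
      push_cast
      exact h1.le
    · have : (⌊x / (2 : ℝ) ^ E⌋ : ℝ) ≤ 2 ^ p := (Int.floor_le _).trans h2.le
      exact_mod_cast this
  · rintro f ⟨hf, hfx⟩
    by_cases hbig : (2 : ℝ) ^ ((p : ℤ) - 1 + E) ≤ |f|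
    · obtain ⟨n, rfl⟩ := exists_eq_mul_of_le hf E hbig
      gcongr
      exact Int.le_floor.2 ((le_div_iff₀ hpos).2 hfx)
    · -- Here `|f| < |x|` and `f ≤ x`, so `x > 0`, and the rounded value is at least `2 ^ (p - 1) * 2 ^ E`.
      push Not at hbig
      have hx0 : 0 < x := by
        by_contra hneg
        push Not at hneg
        rw [abs_of_nonpos hneg] at hlo
        linarith [neg_le_abs f]
      rw [abs_of_pos hx0] at hlo
      have hsplit : (2 : ℝ) ^ ((p : ℤ) - 1 + E) = 2 ^ (p - 1) * 2 ^ E := by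
        rw [zpow_add₀ (by norm_num), ← zpow_natCast]
        congr 2
        omega
      rw [hsplit] at hlo hbig
      refine (le_abs_self f).trans (hbig.le.trans ?_)
      gcongr
      have : (2 : ℤ) ^ (p - 1) ≤ ⌊x / (2 : ℝ) ^ E⌋ := by
        apply Int.le_floor.2
        push_cast
        exact (le_div_iff₀ hpos).2 hlo
      exact_mod_cast this

lemma RD_error {p : ℕ} (hp : 2 ≤ p) (N e : ℤ) (hN : |N| < 2 ^ (2 * p)) :
    RD p (N * (2 : ℝ) ^ e) - N * (2 : ℝ) ^ e ∈ Fp p := by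
  have hpe : (0 : ℝ) < 2 ^ e := by positivity
  by_cases hsmall : |N| ≤ 2 ^ p
  · rw [RD_eq_self (mem_Fp_of_le hp N e hsmall), sub_self]
    exact ⟨0, 0, by simp [one_le_pow₀], by simp⟩
  push Not at hsmall
  have hN0 : N ≠ 0 := by
    rintro rfl
    rw [abs_zero] at hsmall
    exact absurd hsmall (not_lt.2 (by positivity))
  have hx : (N : ℝ) * (2 : ℝ) ^ e ≠ 0 := mul_ne_zero (by exact_mod_cast hN0) hpe.ne'
  have habs : |(N : ℝ) * (2 : ℝ) ^ e| = |(N : ℝ)| * 2 ^ e := by rw [abs_mul, abs_of_pos hpe]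
  have hNr : |(N : ℝ)| < 2 ^ (2 * p) := by exact_mod_cast hN
  have hNl : (2 : ℝ) ^ p < |(N : ℝ)| := by exact_mod_cast hsmall
  rw [RD_eq hp hx]
  have hlo := zpow_fpExp_le p hx
  have hhi := lt_zpow_fpExp p (N * (2 : ℝ) ^ e)
  rw [habs] at hlo hhi
  generalize fpExp p (N * (2 : ℝ) ^ e) = E at *
  have one_lt : (1 : ℝ) < 2 := by norm_num
  have hE1 : e < E := by
    have : (2 : ℝ) ^ ((p : ℤ) + e) < 2 ^ ((p : ℤ) + E) := by
      rw [zpow_add₀ (by norm_num) (p : ℤ) e, zpow_natCast]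
      exact (mul_lt_mul_of_pos_right hNl hpe).trans hhi
    have := (zpow_lt_zpow_iff_right₀ one_lt).1 this
    omega
  have hE2 : E ≤ e + p := by
    have : (2 : ℝ) ^ ((p : ℤ) - 1 + E) < 2 ^ (((2 * p : ℕ) : ℤ) + e) := by
      rw [zpow_add₀ (by norm_num) ((2 * p : ℕ) : ℤ) e, zpow_natCast]
      exact hlo.trans_lt (mul_lt_mul_of_pos_right hNr hpe)
    have := (zpow_lt_zpow_iff_right₀ one_lt).1 this
    push_cast at this
    omega
  have hEe : (2 : ℝ) ^ E = 2 ^ (E - e).toNat * 2 ^ e := by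
    rw [← zpow_natCast, ← zpow_add₀ (by norm_num)]
    congr 1
    omega
  have hk : (2 : ℝ) ^ (E - e).toNat ≤ 2 ^ p := pow_le_pow_right₀ one_lt.le (by omega)
  have hdiv : (N : ℝ) * 2 ^ e / 2 ^ E = N / 2 ^ (E - e).toNat := by
    rw [hEe, mul_div_mul_right _ _ hpe.ne']
  rw [hdiv, hEe]
  generalize (E - e).toNat = k at *
  have hkpos : (0 : ℝ) < 2 ^ k := by positivity
  have h1 := (le_div_iff₀ hkpos).1 (Int.floor_le ((N : ℝ) / 2 ^ k))
  have h2 := (div_lt_iff₀ hkpos).1 (Int.lt_floor_add_one ((N : ℝ) / 2 ^ k))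
  have key := mem_Fp_of_le hp (⌊(N : ℝ) / 2 ^ k⌋ * 2 ^ k - N) e (by
    have : |(⌊(N : ℝ) / 2 ^ k⌋ : ℝ) * 2 ^ k - N| ≤ 2 ^ p := by
      rw [abs_le]; constructor <;> linarith
    exact_mod_cast this)
  convert key using 1
  push_cast
  ring

/-- The sum as an integer multiple of `2 ^ e_b`, when `e_b` is the smaller exponent. -/
lemma exists_sum_eq {p : ℕ} (hp : 2 ≤ p) {a b : ℝ} (ha : a ∈ Fp p) (hb : b ∈ Fp p)
    (ha0 : a ≠ 0) (hb0 : b ≠ 0) (hle : fpExp p b ≤ fpExp p a)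
    (hexp : fpExp p a - fpExp p b ≤ (p : ℤ) - 1) :
    ∃ N e : ℤ, |N| < 2 ^ (2 * p) ∧ a + b = N * (2 : ℝ) ^ e := by
  obtain ⟨A, hA, hAe⟩ := exists_mantissa ha ha0
  obtain ⟨B, hB, hBe⟩ := exists_mantissa hb hb0
  generalize fpExp p a = ea at *
  generalize fpExp p b = eb at *
  obtain ⟨d, rfl⟩ : ∃ d : ℕ, ea = d + eb := ⟨(ea - eb).toNat, by omega⟩
  refine ⟨A * 2 ^ d + B, eb, ?_, ?_⟩
  · obtain ⟨q, rfl⟩ : ∃ q, p = q + 1 := ⟨p - 1, by omega⟩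
    have hd : (2 : ℤ) ^ d ≤ 2 ^ q := pow_le_pow_right₀ (by norm_num) (by omega)
    have hq : (1 : ℤ) ≤ 2 ^ q := one_le_pow₀ (by norm_num)
    have h1 : |A * 2 ^ d + B| ≤ |A| * 2 ^ d + |B| := by
      refine (abs_add_le _ _).trans ?_
      rw [abs_mul, abs_of_pos (by positivity : (0 : ℤ) < 2 ^ d)]
    have h2 : |A| * 2 ^ d ≤ (2 ^ (q + 1) - 1) * 2 ^ q :=
      mul_le_mul hA hd (by positivity) ((abs_nonneg A).trans hA)
    have h3 : (2 : ℤ) ^ (2 * (q + 1)) = 4 * (2 ^ q * 2 ^ q) := by ring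
    rw [pow_succ] at h2 hB
    rw [h3]
    nlinarith
  · rw [hAe, hBe, zpow_add₀ (by norm_num), zpow_natCast]
    push_cast
    ring


/-- Sterbenz-type lemma of Boldo et al.: if the exponents of `a` and `b` differ by at
most `p - 1`, then the error of the directed-rounded sum is itself a floating-point
number. -/
theorem directed_sum_error_representable
    (p : ℕ) (hp : 2 ≤ p) (a b : ℝ)
    (ha : a ∈ Fp p) (hb : b ∈ Fp p) (ha0 : a ≠ 0) (hb0 : b ≠ 0)
    (hexp : |fpExp p a - fpExp p b| ≤ (p : ℤ) - 1)
    (s : ℝ) (hs : s = RD p (a + b) ∨ s = RU p (a + b)) :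
    s - (a + b) ∈ Fp p := by
  obtain ⟨N, e, hN, hsum⟩ : ∃ N e : ℤ, |N| < 2 ^ (2 * p) ∧ a + b = N * (2 : ℝ) ^ e := by
    have h := abs_le.1 hexp
    rcases le_total (fpExp p b) (fpExp p a) with hle | hle
    · exact exists_sum_eq hp ha hb ha0 hb0 hle h.2
    · rw [add_comm]
      exact exists_sum_eq hp hb ha hb0 ha0 hle (by omega)
  rcases hs with rfl | rfl
  · rw [hsum]
    exact RD_error hp N e hN
  · rw [RU_eq_neg_RD, hsum]
    have h := neg_mem_Fp (RD_error hp (-N) e (by rwa [abs_neg]))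
    convert h using 1
    push_cast
    rw [neg_mul]
    ring
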